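/- arXiv:math/0511458 — 2 statements merged into one kernel-verified Lean document; each statement's English description precedes it below -/
import Mathlib

section
/- If g : ℝ⁷ → ℝ⁷ is a linear automorphism satisfying φ(g x, g y, g z) = φ(x, y, z) for all x, y, z ∈ ℝ⁷, then g preserves the Euclidean inner product, i.e. ⟨g x, g y⟩ = ⟨x, y⟩ for all x, y, and det g = 1. (The linear stabilizer G₂ of φ is contained in SO(7).) -/
/-!
In the exterior algebra of the dual space, every vector `x` contracts `φ` to a two-form `ι_x φ`,
and these satisfy Bryant's identity `ι_x φ ∧ ι_y φ ∧ φ = 6 ⟨x, y⟩ vol`. If `g` preserves `φ`,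
pulling back the identity at `(g x, g y)` along `g` gives `det g * ⟨g x, g y⟩ = ⟨x, y⟩`. Taking
determinants of these bilinear forms in dimension seven yields `(det g) ^ 7 * (det g) ^ 2 = 1`. As
nine is odd, `det g = 1`, and then `g` is an isometry.
-/

noncomputable section

open scoped InnerProductSpace

/-- `3 × 3` determinant of coordinates `a, b, c` of `(x, y, z)`. -/
def det3 (a b c : Fin 7) (x y z : EuclideanSpace ℝ (Fin 7)) : ℝ :=
  x a * (y b * z c - y c * z b) - x b * (y a * z c - y c * z a) +
    x c * (y a * z b - y b * z a)

/-- The associative calibration `φ` of Harvey–Lawson on `ℝ⁷`. -/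
def phi (x y z : EuclideanSpace ℝ (Fin 7)) : ℝ :=
  det3 4 5 6 x y z - det3 4 0 1 x y z - det3 4 2 3 x y z -
    det3 5 0 2 x y z - det3 5 3 1 x y z - det3 6 0 3 x y z - det3 6 1 2 x y z

section AnticommutingElements

variable {A : Type*} [Ring A]

/-- The polynomial expression of the associative calibration `φ` in seven elements of a ring; at
the covectors `dx₁, …, dx₇` of the exterior algebra it is `φ` itself. -/
def associativeElement (θ : Fin 7 → A) : A :=
  θ 4 * θ 5 * θ 6 - θ 4 * (θ 0 * θ 1 + θ 2 * θ 3) - θ 5 * (θ 0 * θ 2 + θ 3 * θ 1) -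
    θ 6 * (θ 0 * θ 3 + θ 1 * θ 2)

/-- The contractions of the associative calibration with the seven basis vectors: for
anticommuting `θ`, entry `i` is the coefficient of `θ i` in `associativeElement θ` after moving
`θ i` to the front. -/
def associativeContraction (θ : Fin 7 → A) : Fin 7 → A :=
  ![θ 4 * θ 1 + θ 5 * θ 2 + θ 6 * θ 3,
    θ 6 * θ 2 - θ 4 * θ 0 - θ 5 * θ 3,
    θ 4 * θ 3 - θ 5 * θ 0 - θ 6 * θ 1,
    θ 5 * θ 1 - θ 4 * θ 2 - θ 6 * θ 0,
    θ 5 * θ 6 - θ 0 * θ 1 - θ 2 * θ 3,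
    θ 6 * θ 4 - θ 0 * θ 2 - θ 3 * θ 1,
    θ 4 * θ 5 - θ 0 * θ 3 - θ 1 * θ 2]

/-- The Hodge duals of the two-forms `associativeContraction θ`, for the metric and orientation in
which `θ` is an oriented orthonormal coframe. -/
def associativeContractionStar (θ : Fin 7 → A) : Fin 7 → A :=
  ![-(θ 0 * θ 1 * θ 2 * θ 4 * θ 5) - θ 0 * θ 1 * θ 3 * θ 4 * θ 6 - θ 0 * θ 2 * θ 3 * θ 5 * θ 6,
    θ 0 * θ 1 * θ 3 * θ 4 * θ 5 - θ 0 * θ 1 * θ 2 * θ 4 * θ 6 - θ 1 * θ 2 * θ 3 * θ 5 * θ 6,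
    θ 0 * θ 2 * θ 3 * θ 4 * θ 5 + θ 1 * θ 2 * θ 3 * θ 4 * θ 6 - θ 0 * θ 1 * θ 2 * θ 5 * θ 6,
    θ 0 * θ 2 * θ 3 * θ 4 * θ 6 - θ 1 * θ 2 * θ 3 * θ 4 * θ 5 - θ 0 * θ 1 * θ 3 * θ 5 * θ 6,
    θ 0 * θ 1 * θ 2 * θ 3 * θ 4 - θ 0 * θ 1 * θ 4 * θ 5 * θ 6 - θ 2 * θ 3 * θ 4 * θ 5 * θ 6,
    θ 0 * θ 1 * θ 2 * θ 3 * θ 5 - θ 0 * θ 2 * θ 4 * θ 5 * θ 6 + θ 1 * θ 3 * θ 4 * θ 5 * θ 6,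
    θ 0 * θ 1 * θ 2 * θ 3 * θ 6 - θ 0 * θ 3 * θ 4 * θ 5 * θ 6 - θ 1 * θ 2 * θ 4 * θ 5 * θ 6]

theorem mul_mul_self_eq_zero {a : A} (h : a * a = 0) (b : A) : a * (a * b) = 0 := by
  rw [← mul_assoc, h, zero_mul]

theorem mul_left_anticomm {a b : A} (h : a * b = -(b * a)) (c : A) :
    a * (b * c) = -(b * (a * c)) := by
  rw [← mul_assoc, h, neg_mul, mul_assoc]

variable {θ : Fin 7 → A} (hsq : ∀ i, θ i * θ i = 0) (hanti : ∀ i j, θ i * θ j = -(θ j * θ i))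
include hsq hanti

theorem associativeContraction_mul_associativeElement (i : Fin 7) :
    associativeContraction θ i * associativeElement θ = 2 • associativeContractionStar θ i := by
  have hsq' i := mul_mul_self_eq_zero (hsq i)
  -- The guard `j < i` makes anticommutativity a terminating rewrite rule that sorts monomials.
  have hswap i j (_ : j < i) := hanti i j
  have hswap' i j (_ : j < i) := mul_left_anticomm (hanti i j)
  fin_cases i <;>
    simp only [associativeContraction, associativeElement, associativeContractionStar, mul_assoc,
      mul_add, add_mul, mul_sub, sub_mul, hsq, hsq', hswap, hswap', Matrix.cons_val, Fin.reduceLT,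
      mul_neg, neg_mul, mul_zero, neg_zero, neg_neg, Fin.reduceFinMk, Fin.zero_eta, Fin.mk_one,
      Fin.isValue] <;>
    abel

theorem associativeContraction_mul_associativeContractionStar (i j : Fin 7) :
    associativeContraction θ i * associativeContractionStar θ j =
      if i = j then 3 • (List.ofFn θ).prod else 0 := by
  have hsq' i := mul_mul_self_eq_zero (hsq i)
  have hswap i j (_ : j < i) := hanti i j
  have hswap' i j (_ : j < i) := mul_left_anticomm (hanti i j)
  fin_cases i <;> fin_cases j <;>
    simp only [associativeContraction, associativeContractionStar, List.ofFn_succ, List.ofFn_zero,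
      List.prod_cons, List.prod_nil, mul_one, mul_assoc, mul_add, add_mul, mul_sub, sub_mul, hsq,
      hsq', hswap, hswap', Matrix.cons_val, Fin.reduceLT, mul_neg, neg_mul, mul_zero, neg_zero,
      neg_neg, sub_neg_eq_add, add_zero, sub_zero, zero_sub, zero_add, Fin.reduceEq, if_true,
      if_false, Fin.reduceFinMk, Fin.zero_eta, Fin.mk_one, Fin.isValue, Fin.reduceSucc,
      Fin.succ_zero_eq_one, Fin.succ_one_eq_two] <;>
    abel

theorem associativeContraction_mul_mul_associativeElement (i j : Fin 7) :
    associativeContraction θ i * (associativeContraction θ j * associativeElement θ) =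
      if i = j then 6 • (List.ofFn θ).prod else 0 := by
  rw [associativeContraction_mul_associativeElement hsq hanti, mul_smul_comm,
    associativeContraction_mul_associativeContractionStar hsq hanti, smul_ite, smul_zero,
    smul_smul]
  norm_num

end AnticommutingElements

section Contraction

open ExteriorAlgebra
open CliffordAlgebra (contractLeft contractLeft_ι contractLeft_ι_mul)
open Module (Dual)

variable {R M N : Type*} [CommRing R] [AddCommGroup M] [Module R M] [AddCommGroup N] [Module R N]

theorem map_contractLeft_comp (f : M →ₗ[R] N) (d : Dual R N) (w : ExteriorAlgebra R M) :
    map f (contractLeft (d ∘ₗ f) w) = contractLeft d (map f w) := by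
  induction w using CliffordAlgebra.left_induction with
  | algebraMap r => simp [CliffordAlgebra.contractLeft_algebraMap, AlgHom.commutes]
  | add x y hx hy => simp only [map_add, hx, hy]
  | ι_mul x m hx =>
    have hm : map f (CliffordAlgebra.ι 0 m) = CliffordAlgebra.ι 0 (f m) := map_apply_ι f m
    simp only [contractLeft_ι_mul, map_sub, map_smul, map_mul, hx, hm, LinearMap.comp_apply]

theorem contractLeft_ι_mul_ι_mul_ι (d : Dual R M) (x y z : M) :
    contractLeft d (ι R x * (ι R y * ι R z)) =
      d x • (ι R y * ι R z) - d y • (ι R x * ι R z) + d z • (ι R x * ι R y) := by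
  simp only [ι, contractLeft_ι_mul, contractLeft_ι, Algebra.algebraMap_eq_smul_one, mul_sub,
    mul_smul_comm, mul_one]
  abel

theorem ι_mul_ι_anticomm (x y : M) : ι R x * ι R y = -(ι R y * ι R x) :=
  eq_neg_of_add_eq_zero_left (ι_add_mul_swap x y)

theorem contractLeft_associativeElement (d : Dual R M) (v : Fin 7 → M) :
    contractLeft d (associativeElement (ι R ∘ v)) =
      ∑ i, d (v i) • associativeContraction (ι R ∘ v) i := by
  have hswap i j (_ : j < i) := ι_mul_ι_anticomm (R := R) (v i) (v j)
  simp only [associativeElement, associativeContraction, Fin.sum_univ_seven, Function.comp_apply,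
    Matrix.cons_val, mul_assoc, mul_add, map_add, map_sub, contractLeft_ι_mul_ι_mul_ι]
  simp only [hswap, Fin.reduceLT]
  module

theorem contractLeft_mul_contractLeft_mul_associativeElement (d d' : Dual R M) (v : Fin 7 → M) :
    contractLeft d (associativeElement (ι R ∘ v)) *
        (contractLeft d' (associativeElement (ι R ∘ v)) * associativeElement (ι R ∘ v)) =
      (6 * ∑ i, d (v i) * d' (v i)) • ιMulti R 7 v := by
  have hsq i : (ι R ∘ v) i * (ι R ∘ v) i = 0 := ι_sq_zero (v i)
  have hanti i j : (ι R ∘ v) i * (ι R ∘ v) j = -((ι R ∘ v) j * (ι R ∘ v) i) :=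
    ι_mul_ι_anticomm (v i) (v j)
  have hprod : (List.ofFn (ι R ∘ v)).prod = ιMulti R 7 v := (ιMulti_apply v).symm
  simp only [contractLeft_associativeElement, Finset.sum_mul, Finset.mul_sum, smul_mul_assoc,
    mul_smul_comm, associativeContraction_mul_mul_associativeElement hsq hanti, smul_ite,
    smul_zero, Finset.sum_ite_eq', Finset.mem_univ, if_true, hprod, Finset.sum_smul]
  exact Finset.sum_congr rfl fun i _ => by module

end Contraction

section VolumeForm

variable {R M N : Type*} [CommRing R] [AddCommGroup M] [Module R M] [AddCommGroup N] [Module R N]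

theorem alternatingMap_apply_eq_det_smul {κ : Type*} [DecidableEq κ] [Fintype κ]
    (F : M [⋀^κ]→ₗ[R] N) (b : Module.Basis κ R M) (v : κ → M) : F v = b.det v • F b := by
  suffices h : F = (LinearMap.toSpanSingleton R N (F b)).compAlternatingMap b.det from
    DFunLike.congr_fun h v
  refine b.ext_alternating fun u hu => ?_
  let σ : Equiv.Perm κ := Equiv.ofBijective u (Finite.injective_iff_bijective.1 hu)
  change F (b ∘ σ) = b.det (b ∘ σ) • F b
  simp [AlternatingMap.map_perm, b.det_self]

variable {n : ℕ} (b : Module.Basis (Fin n) R M)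

theorem map_ιMulti_basis (f : M →ₗ[R] M) :
    ExteriorAlgebra.map f (ExteriorAlgebra.ιMulti R n b) =
      LinearMap.det f • ExteriorAlgebra.ιMulti R n b := by
  rw [ExteriorAlgebra.map_apply_ιMulti, alternatingMap_apply_eq_det_smul _ b, b.det_comp,
    b.det_self, mul_one]

theorem ιMulti_basis_ne_zero [Nontrivial R] : ExteriorAlgebra.ιMulti R n b ≠ 0 := by
  intro h
  have hb : exteriorPower.ιMulti R n b = 0 := Subtype.ext h
  have hdet : exteriorPower.alternatingMapLinearEquiv b.det (exteriorPower.ιMulti R n b) = 1 := by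
    rw [exteriorPower.alternatingMapLinearEquiv_apply_ιMulti, b.det_self]
  simp [hb] at hdet

end VolumeForm

section Pairing

open exteriorPower
open Module (Dual)

variable {R M N : Type*} [CommRing R] [AddCommGroup M] [Module R M] [AddCommGroup N] [Module R N]

theorem coe_exteriorPower_map (n : ℕ) (f : M →ₗ[R] N) (w : ⋀[R]^n M) :
    (map n f w : ExteriorAlgebra R N) = ExteriorAlgebra.map f w := by
  suffices h : (⋀[R]^n N).subtype ∘ₗ map n f =
      (ExteriorAlgebra.map f).toLinearMap ∘ₗ (⋀[R]^n M).subtype from LinearMap.congr_fun h w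
  ext v
  simp

theorem pairingDual_map_dualMap (n : ℕ) (f : M →ₗ[R] N) (w : ⋀[R]^n (Dual R N)) :
    pairingDual R M n (map n f.dualMap w) = pairingDual R N n w ∘ₗ map n f := by
  suffices h : pairingDual R M n ∘ₗ map n f.dualMap = (map n f).dualMap ∘ₗ pairingDual R N n from
    LinearMap.congr_fun h w
  ext v u
  simp [Function.comp_def]

theorem pairingDual_ιMulti_eval {n : ℕ} (u : Fin n → M) (w : ⋀[R]^n (Dual R M)) :
    pairingDual R (Dual R M) n (ιMulti R n (Dual.eval R M ∘ u)) w =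
      pairingDual R M n w (ιMulti R n u) := by
  suffices h : pairingDual R (Dual R M) n (ιMulti R n (Dual.eval R M ∘ u)) =
      (pairingDual R M n).flip (ιMulti R n u) from LinearMap.congr_fun h w
  ext v
  simp [← Matrix.det_transpose (Matrix.of fun i j => v i (u j)), Matrix.transpose]

theorem pairingDual_injective [Module.Free R M] [Module.Finite R M] (n : ℕ) :
    Function.Injective (pairingDual R M n) := by
  classical
  rcases subsingleton_or_nontrivial R with _ | _
  · have := Module.subsingleton R (⋀[R]^n (Dual R M))
    exact Function.injective_of_subsingleton _
  let b := Module.finBasis R M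
  have hcoord : b.dualBasis.coord = Dual.eval R M ∘ b := by
    funext i
    ext f
    simp
  refine (injective_iff_map_eq_zero _).2 fun w hw => (b.dualBasis.exteriorPower n).ext_elem ?_
  intro s
  rw [basis_repr_apply, ιMultiDual, ιMulti_family, hcoord, Function.comp_assoc,
    pairingDual_ιMulti_eval, hw, map_zero, LinearMap.zero_apply, Finsupp.zero_apply]

end Pairing

section Conformal

variable {E : Type*} [NormedAddCommGroup E] [InnerProductSpace ℝ E] [FiniteDimensional ℝ E]

theorem pow_finrank_mul_det_sq_eq_one {f : E →ₗ[ℝ] E} {c : ℝ}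
    (h : ∀ x y, c * ⟪f x, f y⟫_ℝ = ⟪x, y⟫_ℝ) :
    c ^ Module.finrank ℝ E * LinearMap.det f ^ 2 = 1 := by
  have hf : c • (f.adjoint ∘ₗ f) = LinearMap.id := by
    refine LinearMap.ext fun x => ext_inner_right ℝ fun y => ?_
    simp [inner_smul_left, LinearMap.adjoint_inner_left, h]
  have hdet : LinearMap.det f ^ 2 = LinearMap.det (f.adjoint ∘ₗ f) := by
    rw [← f.normDet_sq, f.normDet_eq_abs_det, sq_abs, RCLike.ofReal_real_eq_id, id]
  rw [hdet, ← LinearMap.det_smul, hf, LinearMap.det_id]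

end Conformal

section Calibration

open exteriorPower (ιMulti pairingDual)
open CliffordAlgebra (contractLeft)
open Module (Dual)

/-- The expression of the associative calibration `φ` in seven vectors, as an element of the third
exterior power; see `associativeElement` for the same element of the exterior algebra. -/
def associativeTrivector (R : Type*) {M : Type*} [CommRing R] [AddCommGroup M] [Module R M]
    (v : Fin 7 → M) : ⋀[R]^3 M :=
  ιMulti R 3 ![v 4, v 5, v 6] - ιMulti R 3 ![v 4, v 0, v 1] - ιMulti R 3 ![v 4, v 2, v 3] -
    ιMulti R 3 ![v 5, v 0, v 2] - ιMulti R 3 ![v 5, v 3, v 1] - ιMulti R 3 ![v 6, v 0, v 3] -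
    ιMulti R 3 ![v 6, v 1, v 2]

theorem coe_associativeTrivector {R M : Type*} [CommRing R] [AddCommGroup M] [Module R M]
    (v : Fin 7 → M) :
    (associativeTrivector R v : ExteriorAlgebra R M) =
      associativeElement (ExteriorAlgebra.ι R ∘ v) := by
  simp only [associativeTrivector, associativeElement, AddSubgroupClass.coe_sub,
    exteriorPower.ιMulti_apply_coe, ExteriorAlgebra.ιMulti_succ_apply,
    ExteriorAlgebra.ιMulti_apply, Matrix.cons_val_zero, Matrix.tail_cons,
    Matrix.cons_val_fin_one, List.ofFn_zero, List.prod_nil, mul_one, Function.comp_apply,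
    mul_assoc, mul_add]
  abel

/-- The basis `dx₁, …, dx₇` of the dual of `ℝ⁷`, indexed from `0`. -/
def dx : Module.Basis (Fin 7) ℝ (Dual ℝ (EuclideanSpace ℝ (Fin 7))) :=
  (EuclideanSpace.basisFun (Fin 7) ℝ).toBasis.dualBasis

theorem dx_apply (i : Fin 7) (x : EuclideanSpace ℝ (Fin 7)) : dx i x = x i := by
  simp [dx]

/-- The associative calibration `φ` as an element of the exterior algebra of the dual of `ℝ⁷`. -/
abbrev associativeForm : ExteriorAlgebra ℝ (Dual ℝ (EuclideanSpace ℝ (Fin 7))) :=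
  associativeElement (ExteriorAlgebra.ι ℝ ∘ dx)

theorem pairingDual_associativeTrivector_dx (x y z : EuclideanSpace ℝ (Fin 7)) :
    pairingDual ℝ _ 3 (associativeTrivector ℝ dx) (ιMulti ℝ 3 ![x, y, z]) = phi x y z := by
  simp only [associativeTrivector, map_sub, LinearMap.sub_apply,
    exteriorPower.pairingDual_ιMulti_ιMulti, Matrix.det_fin_three, Matrix.of_apply,
    Matrix.cons_val_zero, Matrix.cons_val_one, Matrix.cons_val, dx_apply, phi, det3]
  ring

theorem contractLeft_mul_contractLeft_mul_associativeForm (x y : EuclideanSpace ℝ (Fin 7)) :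
    contractLeft (Dual.eval ℝ _ x) associativeForm *
        (contractLeft (Dual.eval ℝ _ y) associativeForm * associativeForm) =
      (6 * ⟪x, y⟫_ℝ) • ExteriorAlgebra.ιMulti ℝ 7 dx := by
  rw [contractLeft_mul_contractLeft_mul_associativeElement]
  simp only [Dual.eval_apply, dx_apply, PiLp.inner_apply, RCLike.inner_apply, conj_trivial,
    mul_comm]

variable {g : EuclideanSpace ℝ (Fin 7) →ₗ[ℝ] EuclideanSpace ℝ (Fin 7)}
  (hg : ∀ x y z, phi (g x) (g y) (g z) = phi x y z)
include hg

theorem map_dualMap_associativeForm :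
    ExteriorAlgebra.map g.dualMap associativeForm = associativeForm := by
  suffices h : exteriorPower.map 3 g.dualMap (associativeTrivector ℝ dx) =
      associativeTrivector ℝ dx by
    rw [associativeForm, ← coe_associativeTrivector, ← coe_exteriorPower_map, h]
  refine pairingDual_injective 3 (exteriorPower.linearMap_ext (AlternatingMap.ext fun v => ?_))
  obtain ⟨x, y, z, rfl⟩ : ∃ x y z, v = ![x, y, z] :=
    ⟨v 0, v 1, v 2, List.ofFn_injective (by simp)⟩
  have hgv : g ∘ ![x, y, z] = ![g x, g y, g z] := by
    funext i
    fin_cases i <;> rfl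
  simp only [pairingDual_map_dualMap, LinearMap.compAlternatingMap_apply, LinearMap.comp_apply,
    exteriorPower.map_apply_ιMulti, hgv, pairingDual_associativeTrivector_dx, hg]

theorem map_dualMap_contractLeft_eval (x : EuclideanSpace ℝ (Fin 7)) :
    ExteriorAlgebra.map g.dualMap (contractLeft (Dual.eval ℝ _ (g x)) associativeForm) =
      contractLeft (Dual.eval ℝ _ x) associativeForm := by
  have hx : Dual.eval ℝ _ (g x) = Dual.eval ℝ _ x ∘ₗ g.dualMap := rfl
  rw [hx, map_contractLeft_comp, map_dualMap_associativeForm hg]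

theorem det_mul_inner_map_map (x y : EuclideanSpace ℝ (Fin 7)) :
    LinearMap.det g * ⟪g x, g y⟫_ℝ = ⟪x, y⟫_ℝ := by
  have hvol := congrArg (ExteriorAlgebra.map g.dualMap)
    (contractLeft_mul_contractLeft_mul_associativeForm (g x) (g y))
  rw [map_mul, map_mul, map_dualMap_contractLeft_eval hg, map_dualMap_contractLeft_eval hg,
    map_dualMap_associativeForm hg, contractLeft_mul_contractLeft_mul_associativeForm, map_smul,
    map_ιMulti_basis, LinearMap.det_dualMap, smul_smul] at hvol
  linarith [smul_left_injective ℝ (ιMulti_basis_ne_zero dx) hvol]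

end Calibration

theorem phi_stabilizer_mem_SO7_general
    (g : EuclideanSpace ℝ (Fin 7) →ₗ[ℝ] EuclideanSpace ℝ (Fin 7))
    (hg : ∀ x y z, phi (g x) (g y) (g z) = phi x y z) :
    (∀ x y, ⟪g x, g y⟫_ℝ = ⟪x, y⟫_ℝ) ∧ LinearMap.det g = 1 := by
  have hdet : LinearMap.det g = 1 := by
    have h := pow_finrank_mul_det_sq_eq_one (det_mul_inner_map_map hg)
    rw [finrank_euclideanSpace_fin, ← pow_add] at h
    exact (Odd.pow_inj (by decide : Odd 9)).1 (h.trans (one_pow 9).symm)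
  refine ⟨fun x y => ?_, hdet⟩
  simpa [hdet] using det_mul_inner_map_map hg x y

/-- A linear automorphism of `ℝ⁷` preserving `φ` preserves the Euclidean inner
product and has determinant `1`: the stabilizer `G₂` of `φ` lies in `SO(7)`. -/
theorem phi_stabilizer_mem_SO7
    (g : EuclideanSpace ℝ (Fin 7) ≃ₗ[ℝ] EuclideanSpace ℝ (Fin 7))
    (hg : ∀ x y z, phi (g x) (g y) (g z) = phi x y z) :
    (∀ x y, ⟪g x, g y⟫_ℝ = ⟪x, y⟫_ℝ) ∧
      LinearMap.det (g : EuclideanSpace ℝ (Fin 7) →ₗ[ℝ] EuclideanSpace ℝ (Fin 7)) = 1 := by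
  exact phi_stabilizer_mem_SO7_general _ hg
end
end

section
/- Let V and W be 4-dimensional linear subspaces of ℝ⁷ on each of which φ vanishes identically (i.e. φ(x, y, z) = 0 whenever x, y, z all lie in V, and likewise for W). Then there exists a linear isometry g of ℝ⁷ satisfying φ(g x, g y, g z) = φ(x, y, z) for all x, y, z ∈ ℝ⁷ and g(V) = W. (G₂ acts transitively on the Grassmannian of coassociative 4-planes; hence coassociative 4-folds have no first-order invariants.) -/
noncomputable section

open scoped InnerProductSpace

/-!
Let `×` be the cross product of `ℝ⁷` determined by `⟪x × y, z⟫ = φ(x, y, z)`. An orthonormal triple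
`(a, b, c)` with `φ(a, b, c) = 0` generates `ℝ⁷`: the vectors `a, b, c, b × c, c × a, a × b` and
`(a × b) × c` form an orthonormal basis. Given two such triples, the isometry matching their bases
commutes with left multiplication by the generators `a`, `b`, `c`. Since left multiplication by
`x × y` is expressible through those by `x` and `y`, it commutes with all left multiplications, so
it preserves `×` and hence `φ`. Any orthonormal triple in a coassociative plane `V` is of this
kind, and it determines `V`, the orthogonal complement of `a × b`, `b × c`, `c × a`.
-/

local notation "ℝ⁷" => EuclideanSpace ℝ (Fin 7)

theorem mem_orthogonal_span_iff {𝕜 E : Type*} [RCLike 𝕜] [NormedAddCommGroup E]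
    [InnerProductSpace 𝕜 E] {s : Set E} {x : E} :
    x ∈ (Submodule.span 𝕜 s)ᗮ ↔ ∀ u ∈ s, ⟪u, x⟫_𝕜 = 0 := by
  rw [← Submodule.span_singleton_le_iff_mem, ← Submodule.isOrtho_iff_le, Submodule.isOrtho_comm,
    Submodule.isOrtho_span]
  simp only [Set.mem_singleton_iff, forall_eq]

/-- The seven-dimensional cross product, characterised by `⟪cross7 x y, z⟫ = phi x y z`
(see `inner_cross7`); its coordinates are therefore the values of `phi x y` on the standard
basis. -/
def cross7 : ℝ⁷ →ₗ[ℝ] ℝ⁷ →ₗ[ℝ] ℝ⁷ :=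
  LinearMap.mk₂ ℝ (fun x y => WithLp.toLp 2 fun i => phi x y (EuclideanSpace.single i 1))
    (fun x y z => by ext i; simp only [phi, det3, PiLp.add_apply]; ring)
    (fun t x y => by ext i; simp only [phi, det3, PiLp.smul_apply, smul_eq_mul]; ring)
    (fun x y z => by ext i; simp only [phi, det3, PiLp.add_apply]; ring)
    (fun t x y => by ext i; simp only [phi, det3, PiLp.smul_apply, smul_eq_mul]; ring)

local infix:74 "⨯₇" => cross7

theorem cross7_eq (x y : ℝ⁷) : x ⨯₇ y =
    !₂[x 4 * y 1 - x 1 * y 4 + x 5 * y 2 - x 2 * y 5 + x 6 * y 3 - x 3 * y 6,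
       x 0 * y 4 - x 4 * y 0 + x 3 * y 5 - x 5 * y 3 + x 6 * y 2 - x 2 * y 6,
       x 4 * y 3 - x 3 * y 4 + x 0 * y 5 - x 5 * y 0 + x 1 * y 6 - x 6 * y 1,
       x 2 * y 4 - x 4 * y 2 + x 5 * y 1 - x 1 * y 5 + x 0 * y 6 - x 6 * y 0,
       x 5 * y 6 - x 6 * y 5 + x 1 * y 0 - x 0 * y 1 + x 3 * y 2 - x 2 * y 3,
       x 6 * y 4 - x 4 * y 6 + x 2 * y 0 - x 0 * y 2 + x 1 * y 3 - x 3 * y 1,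
       x 4 * y 5 - x 5 * y 4 + x 3 * y 0 - x 0 * y 3 + x 2 * y 1 - x 1 * y 2] := by
  ext i
  fin_cases i <;>
    simp only [cross7, LinearMap.mk₂_apply, phi, det3, PiLp.single_apply, Fin.reduceFinMk,
      Fin.zero_eta, Fin.mk_one, Fin.reduceEq, one_ne_zero, zero_ne_one, ↓reduceIte, Matrix.cons_val,
      Matrix.cons_val_zero, Matrix.cons_val_one] <;>
    ring

theorem inner_cross7 (x y z : ℝ⁷) : ⟪x ⨯₇ y, z⟫_ℝ = phi x y z := by
  simp only [cross7_eq, PiLp.inner_apply, RCLike.inner_apply, Real.ringHom_apply,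
    Fin.sum_univ_seven, Matrix.cons_val, phi, det3]
  ring

theorem phi_rotate (x y z : ℝ⁷) : phi y z x = phi x y z := by
  simp only [phi, det3]
  ring

theorem isAlt_cross7 : cross7.IsAlt := fun x => by
  ext i
  simp only [cross7, LinearMap.mk₂_apply, phi, det3, PiLp.zero_apply]
  ring

theorem cross7_cross7 (x y z : ℝ⁷) :
    (x ⨯₇ y) ⨯₇ z = -(x ⨯₇ (y ⨯₇ z)) - ⟪x, y⟫_ℝ • z + (2 * ⟪x, z⟫_ℝ) • y - ⟪y, z⟫_ℝ • x := by
  ext i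
  fin_cases i <;>
    simp only [cross7_eq, Fin.reduceFinMk, Fin.zero_eta, Fin.mk_one, Matrix.cons_val,
      Matrix.cons_val_zero, Matrix.cons_val_one, PiLp.inner_apply, RCLike.inner_apply,
      Real.ringHom_apply, Fin.sum_univ_seven, PiLp.add_apply, PiLp.sub_apply, PiLp.neg_apply,
      PiLp.smul_apply, smul_eq_mul] <;>
    ring

theorem inner_cross7_left (x y z : ℝ⁷) : ⟪x ⨯₇ y, z⟫_ℝ = ⟪x, y ⨯₇ z⟫_ℝ := by
  rw [inner_cross7, real_inner_comm, inner_cross7, phi_rotate x]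

theorem inner_cross7_self_left (x y : ℝ⁷) : ⟪x, x ⨯₇ y⟫_ℝ = 0 := by
  rw [← inner_cross7_left, isAlt_cross7, inner_zero_left]

theorem inner_cross7_self_right (x y : ℝ⁷) : ⟪x, y ⨯₇ x⟫_ℝ = 0 := by
  rw [← isAlt_cross7.neg, inner_neg_right, inner_cross7_self_left, neg_zero]

theorem cross7_cross7_self (x y : ℝ⁷) :
    x ⨯₇ (x ⨯₇ y) = ⟪x, y⟫_ℝ • x - ⟪x, x⟫_ℝ • y := by
  have h := cross7_cross7 x x y
  rw [isAlt_cross7, map_zero, LinearMap.zero_apply] at h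
  linear_combination (norm := module) h

theorem cross7_cross7_self_of_inner_eq_zero {x y : ℝ⁷} (hx : ⟪x, x⟫_ℝ = 1) (hxy : ⟪x, y⟫_ℝ = 0) :
    x ⨯₇ (x ⨯₇ y) = -y := by
  rw [cross7_cross7_self, hx, hxy, zero_smul, one_smul, zero_sub]

theorem inner_cross7_cross7 (x y z : ℝ⁷) :
    ⟪x ⨯₇ y, x ⨯₇ z⟫_ℝ = ⟪x, x⟫_ℝ * ⟪y, z⟫_ℝ - ⟪x, y⟫_ℝ * ⟪x, z⟫_ℝ := by
  rw [← isAlt_cross7.neg y x, inner_neg_left, inner_cross7_left, cross7_cross7_self]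
  simp only [inner_sub_right, inner_smul_right, real_inner_comm]
  ring

/-- The group `G₂`, realised as the stabiliser of `phi` in `O(7)`. -/
def G2 : Subgroup (ℝ⁷ ≃ₗᵢ[ℝ] ℝ⁷) where
  carrier := {g | ∀ x y z, phi (g x) (g y) (g z) = phi x y z}
  one_mem' _ _ _ := rfl
  mul_mem' hg hk x y z := (hg _ _ _).trans (hk x y z)
  inv_mem' {g} hg x y z := by
    simpa only [LinearIsometryEquiv.coe_inv, LinearIsometryEquiv.apply_symm_apply] using
      (hg (g⁻¹ x) (g⁻¹ y) (g⁻¹ z)).symm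

/-- The vectors `x` such that `g` intertwines left multiplication by `x` with left multiplication by
`g x`; to prove that `g` is multiplicative is to prove that this subspace is everything. -/
def crossIntertwiner (g : ℝ⁷ ≃ₗᵢ[ℝ] ℝ⁷) : Submodule ℝ ℝ⁷ where
  carrier := {x | ∀ y, g (x ⨯₇ y) = g x ⨯₇ g y}
  add_mem' hx hy z := by simp only [map_add, LinearMap.add_apply, hx z, hy z]
  zero_mem' z := by simp only [map_zero, LinearMap.zero_apply]
  smul_mem' t x hx z := by simp only [map_smul, LinearMap.smul_apply, hx z]

theorem mem_G2_of_crossIntertwiner_eq_top {g : ℝ⁷ ≃ₗᵢ[ℝ] ℝ⁷} (hg : crossIntertwiner g = ⊤) :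
    g ∈ G2 := fun x y z => by
  have hx : x ∈ crossIntertwiner g := hg ▸ Submodule.mem_top
  rw [← inner_cross7, ← hx y, g.inner_map_map, inner_cross7]

-- `cross7_cross7` expresses left multiplication by `x ⨯₇ y` through left multiplication by `x` and
-- by `y` and inner products, all of which `g` respects.
theorem cross7_mem_crossIntertwiner {g : ℝ⁷ ≃ₗᵢ[ℝ] ℝ⁷} {x y : ℝ⁷}
    (hx : x ∈ crossIntertwiner g) (hy : y ∈ crossIntertwiner g) :
    x ⨯₇ y ∈ crossIntertwiner g := fun z => by
  rw [hx y, cross7_cross7, cross7_cross7]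
  simp only [map_add, map_sub, map_neg, map_smul, hx (y ⨯₇ z), hy z, g.inner_map_map]

/-- Basic triples: orthonormal triples whose third vector is also orthogonal to the cross product
of the first two, which is what `phi a b c = 0` says. They play the role of the standard generators
of the imaginary octonions. -/
structure IsBasicTriple (a b c : ℝ⁷) : Prop where
  orthonormal : Orthonormal ℝ ![a, b, c]
  phi_eq_zero : phi a b c = 0

/-- The frame of `ℝ⁷` generated by a basic triple. The order of the factors is chosen so that
rotating `(a, b, c)` permutes the frame without introducing signs. -/
def basicFrame (a b c : ℝ⁷) : Fin 7 → ℝ⁷ :=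
  ![a, b, c, b ⨯₇ c, c ⨯₇ a, a ⨯₇ b, (a ⨯₇ b) ⨯₇ c]

/-- The permutation of the entries of `basicFrame` induced by rotating `(a, b, c)` to `(b, c, a)`
(see `IsBasicTriple.basicFrame_rotate`); it reduces facts about the frame to facts about `a` and
`b ⨯₇ c`. -/
def frameRotation : Equiv.Perm (Fin 7) := c[0, 1, 2] * c[3, 4, 5]

namespace IsBasicTriple

variable {a b c : ℝ⁷}

theorem rotate (h : IsBasicTriple a b c) : IsBasicTriple b c a where
  orthonormal := by
    have := h.orthonormal.comp ![1, 2, 0] (by decide)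
    convert! this using 1
    ext i : 1
    fin_cases i <;> rfl
  phi_eq_zero := (phi_rotate a b c).trans h.phi_eq_zero

theorem inner_self (h : IsBasicTriple a b c) : ⟪a, a⟫_ℝ = 1 :=
  inner_self_eq_one_of_norm_eq_one (h.orthonormal.1 0)

theorem inner_first_second (h : IsBasicTriple a b c) : ⟪a, b⟫_ℝ = 0 :=
  h.orthonormal.2 (show (0 : Fin 3) ≠ 1 by decide)

theorem inner_first_third (h : IsBasicTriple a b c) : ⟪a, c⟫_ℝ = 0 :=
  h.orthonormal.2 (show (0 : Fin 3) ≠ 2 by decide)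

theorem inner_cross7_eq_zero (h : IsBasicTriple a b c) : ⟪a, b ⨯₇ c⟫_ℝ = 0 := by
  rw [← inner_cross7_left, inner_cross7, h.phi_eq_zero]

theorem cross7_cross7_eq_neg (h : IsBasicTriple a b c) :
    (a ⨯₇ b) ⨯₇ c = -(a ⨯₇ (b ⨯₇ c)) := by
  rw [cross7_cross7, h.inner_first_second, h.inner_first_third, h.rotate.inner_first_second]
  simp only [mul_zero, zero_smul, sub_zero, add_zero]

theorem cross7_cross7_rotate (h : IsBasicTriple a b c) : (b ⨯₇ c) ⨯₇ a = (a ⨯₇ b) ⨯₇ c := by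
  rw [← isAlt_cross7.neg a, h.cross7_cross7_eq_neg]

theorem cross7_basicFrame (h : IsBasicTriple a b c) (i : Fin 7) :
    a ⨯₇ basicFrame a b c i =
      ![0, a ⨯₇ b, -(c ⨯₇ a), -((a ⨯₇ b) ⨯₇ c), c, -b, b ⨯₇ c] i := by
  fin_cases i
  · exact isAlt_cross7 a
  · rfl
  · exact (isAlt_cross7.neg c a).symm
  · exact (neg_eq_iff_eq_neg.2 h.cross7_cross7_eq_neg).symm
  · change a ⨯₇ (c ⨯₇ a) = c
    rw [← isAlt_cross7.neg a c, map_neg,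
      cross7_cross7_self_of_inner_eq_zero h.inner_self h.inner_first_third, neg_neg]
  · exact cross7_cross7_self_of_inner_eq_zero h.inner_self h.inner_first_second
  · change a ⨯₇ ((a ⨯₇ b) ⨯₇ c) = b ⨯₇ c
    rw [h.cross7_cross7_eq_neg, map_neg,
      cross7_cross7_self_of_inner_eq_zero h.inner_self h.inner_cross7_eq_zero, neg_neg]

theorem basicFrame_rotate (h : IsBasicTriple a b c) (i : Fin 7) :
    basicFrame b c a i = basicFrame a b c (frameRotation i) := by
  fin_cases i <;> first | rfl | exact h.cross7_cross7_rotate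

theorem inner_basicFrame_of_rotate (h : IsBasicTriple a b c) {i k : Fin 7}
    (hi : ∀ j, ⟪basicFrame b c a i, basicFrame b c a j⟫_ℝ = if i = j then 1 else 0)
    (hik : frameRotation i = k) (j : Fin 7) :
    ⟪basicFrame a b c k, basicFrame a b c j⟫_ℝ = if k = j then 1 else 0 := by
  obtain ⟨j, rfl⟩ := frameRotation.surjective j
  simp only [← hik, ← h.basicFrame_rotate, hi, frameRotation.injective.eq_iff]

theorem inner_basicFrame_zero (h : IsBasicTriple a b c) (j : Fin 7) :
    ⟪basicFrame a b c 0, basicFrame a b c j⟫_ℝ = if 0 = j then 1 else 0 := by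
  fin_cases j
  · exact h.inner_self
  · exact h.inner_first_second
  · exact h.inner_first_third
  · exact h.inner_cross7_eq_zero
  · exact inner_cross7_self_right a c
  · exact inner_cross7_self_left a b
  · change ⟪a, (a ⨯₇ b) ⨯₇ c⟫_ℝ = 0
    rw [h.cross7_cross7_eq_neg, inner_neg_right, inner_cross7_self_left, neg_zero]

theorem inner_cross7_cross7_rotate (h : IsBasicTriple a b c) : ⟪b ⨯₇ c, c ⨯₇ a⟫_ℝ = 0 := by
  rw [← isAlt_cross7.neg c b, inner_neg_left, inner_cross7_cross7,
    h.rotate.rotate.inner_first_second, h.rotate.rotate.inner_first_third,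
    h.rotate.inner_first_third, mul_zero, zero_mul, sub_zero, neg_zero]

theorem inner_basicFrame_three (h : IsBasicTriple a b c) (j : Fin 7) :
    ⟪basicFrame a b c 3, basicFrame a b c j⟫_ℝ = if 3 = j then 1 else 0 := by
  fin_cases j
  · exact (real_inner_comm _ _).trans h.inner_cross7_eq_zero
  · exact (real_inner_comm _ _).trans (inner_cross7_self_left b c)
  · exact (real_inner_comm _ _).trans (inner_cross7_self_right c b)
  · change ⟪b ⨯₇ c, b ⨯₇ c⟫_ℝ = 1
    rw [inner_cross7_cross7, h.rotate.inner_self, h.rotate.rotate.inner_self,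
      h.rotate.inner_first_second, mul_one, zero_mul, sub_zero]
  · exact h.inner_cross7_cross7_rotate
  · exact (real_inner_comm _ _).trans h.rotate.rotate.inner_cross7_cross7_rotate
  · change ⟪b ⨯₇ c, (a ⨯₇ b) ⨯₇ c⟫_ℝ = 0
    rw [← h.cross7_cross7_rotate, inner_cross7_self_left]

theorem inner_basicFrame_of_ne_six (h : IsBasicTriple a b c) {i : Fin 7} (hi : i ≠ 6)
    (j : Fin 7) :
    ⟪basicFrame a b c i, basicFrame a b c j⟫_ℝ = if i = j then 1 else 0 := by
  have row_one {a b c} (h : IsBasicTriple a b c) :=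
    h.inner_basicFrame_of_rotate h.rotate.inner_basicFrame_zero (k := 1) (by decide)
  have row_four {a b c} (h : IsBasicTriple a b c) :=
    h.inner_basicFrame_of_rotate h.rotate.inner_basicFrame_three (k := 4) (by decide)
  fin_cases i
  · exact h.inner_basicFrame_zero j
  · exact row_one h j
  · exact h.inner_basicFrame_of_rotate (row_one h.rotate) (by decide) j
  · exact h.inner_basicFrame_three j
  · exact row_four h j
  · exact h.inner_basicFrame_of_rotate (row_four h.rotate) (by decide) j
  · exact absurd rfl hi

theorem inner_basicFrame_six (h : IsBasicTriple a b c) :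
    ⟪basicFrame a b c 6, basicFrame a b c 6⟫_ℝ = 1 := by
  change ⟪(a ⨯₇ b) ⨯₇ c, (a ⨯₇ b) ⨯₇ c⟫_ℝ = 1
  rw [h.cross7_cross7_eq_neg, inner_neg_neg, inner_cross7_cross7,
    h.inner_self, h.inner_cross7_eq_zero, one_mul, mul_zero, sub_zero]
  exact h.inner_basicFrame_three 3

theorem orthonormal_basicFrame (h : IsBasicTriple a b c) : Orthonormal ℝ (basicFrame a b c) := by
  refine orthonormal_iff_ite.2 fun i j => ?_
  by_cases hi : i = 6
  · by_cases hj : j = 6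
    · rw [hi, hj, h.inner_basicFrame_six, if_pos rfl]
    · rw [real_inner_comm, h.inner_basicFrame_of_ne_six hj, if_congr eq_comm rfl rfl]
  · exact h.inner_basicFrame_of_ne_six hi j

theorem span_basicFrame (h : IsBasicTriple a b c) :
    Submodule.span ℝ (Set.range (basicFrame a b c)) = ⊤ :=
  h.orthonormal_basicFrame.linearIndependent.span_eq_top_of_card_eq_finrank (by simp)

/-- `basicFrame a b c` as an orthonormal basis; isometries in `G₂` are built by matching two such
bases. -/
def basis (h : IsBasicTriple a b c) : OrthonormalBasis (Fin 7) ℝ ℝ⁷ :=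
  OrthonormalBasis.mk h.orthonormal_basicFrame h.span_basicFrame.ge

theorem basis_apply (h : IsBasicTriple a b c) (i : Fin 7) : h.basis i = basicFrame a b c i := by
  simp only [basis, OrthonormalBasis.coe_mk]

theorem eq_top_of_cross7_mem (h : IsBasicTriple a b c) {S : Submodule ℝ ℝ⁷}
    (hS : Submodule.map₂ cross7 S S ≤ S) (ha : a ∈ S) (hb : b ∈ S) (hc : c ∈ S) : S = ⊤ := by
  rw [eq_top_iff, ← h.span_basicFrame, Submodule.span_le, Set.range_subset_iff]
  replace hS := Submodule.map₂_le.1 hS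
  intro i
  fin_cases i
  exacts [ha, hb, hc, hS b hb c hc, hS c hc a ha, hS a ha b hb, hS _ (hS a ha b hb) c hc]

theorem mem_crossIntertwiner {a' b' c' : ℝ⁷} (h : IsBasicTriple a b c)
    (h' : IsBasicTriple a' b' c') {g : ℝ⁷ ≃ₗᵢ[ℝ] ℝ⁷}
    (hg : ∀ i, g (basicFrame a b c i) = basicFrame a' b' c' i) : a ∈ crossIntertwiner g := by
  suffices g.toLinearMap ∘ₗ cross7 a = cross7 (g a) ∘ₗ g.toLinearMap from
    LinearMap.congr_fun this
  refine LinearMap.ext_on_range h.span_basicFrame fun i => ?_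
  change g (a ⨯₇ basicFrame a b c i) = g a ⨯₇ g (basicFrame a b c i)
  rw [hg, show g a = a' from hg 0, h.cross7_basicFrame, h'.cross7_basicFrame]
  fin_cases i
  · exact map_zero g
  · exact hg 5
  · exact (map_neg g _).trans (congrArg _ (hg 4))
  · exact (map_neg g _).trans (congrArg _ (hg 6))
  · exact hg 2
  · exact (map_neg g _).trans (congrArg _ (hg 1))
  · exact hg 3

theorem exists_mem_G2_map_eq {a' b' c' : ℝ⁷} (h : IsBasicTriple a b c)
    (h' : IsBasicTriple a' b' c') :
    ∃ g ∈ G2, g a = a' ∧ g b = b' ∧ g c = c' := by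
  let g := h.basis.equiv h'.basis (Equiv.refl _)
  have hg (i : Fin 7) : g (basicFrame a b c i) = basicFrame a' b' c' i := by
    simpa only [basis_apply, Equiv.refl_apply] using
      h.basis.equiv_apply_basis h'.basis (Equiv.refl _) i
  have hg_rotate (i : Fin 7) : g (basicFrame b c a i) = basicFrame b' c' a' i := by
    simpa only [h.basicFrame_rotate, h'.basicFrame_rotate] using hg _
  have hg_rotate_rotate (i : Fin 7) : g (basicFrame c a b i) = basicFrame c' a' b' i := by
    simpa only [h.rotate.basicFrame_rotate, h'.rotate.basicFrame_rotate] using hg_rotate _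
  have htop : crossIntertwiner g = ⊤ := h.eq_top_of_cross7_mem
    (Submodule.map₂_le.2 fun _ hx _ hy => cross7_mem_crossIntertwiner hx hy)
    (h.mem_crossIntertwiner h' hg)
    (h.rotate.mem_crossIntertwiner h'.rotate hg_rotate)
    (h.rotate.rotate.mem_crossIntertwiner h'.rotate.rotate hg_rotate_rotate)
  exact ⟨g, mem_G2_of_crossIntertwiner_eq_top htop, hg 0, hg 1, hg 2⟩

end IsBasicTriple

/-- Coassociative planes: four-dimensional subspaces of `ℝ⁷` on which `phi` vanishes
identically. -/
structure IsCoassociative (V : Submodule ℝ ℝ⁷) : Prop where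
  finrank_eq : Module.finrank ℝ V = 4
  phi_eq_zero : ∀ x ∈ V, ∀ y ∈ V, ∀ z ∈ V, phi x y z = 0

namespace IsCoassociative

variable {V : Submodule ℝ ℝ⁷} {a b c : ℝ⁷}

theorem exists_isBasicTriple (hV : IsCoassociative V) :
    ∃ a ∈ V, ∃ b ∈ V, ∃ c ∈ V, IsBasicTriple a b c := by
  let e := (stdOrthonormalBasis ℝ V).reindex (finCongr hV.finrank_eq)
  refine ⟨e 0, (e 0).2, e 1, (e 1).2, e 2, (e 2).2, ?_,
    hV.phi_eq_zero _ (e 0).2 _ (e 1).2 _ (e 2).2⟩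
  have he := (e.orthonormal.comp ![0, 1, 2] (by decide)).comp_linearIsometry V.subtypeₗᵢ
  convert! he using 1
  ext i : 1
  fin_cases i <;> rfl

theorem eq_orthogonal_span (hV : IsCoassociative V) (h : IsBasicTriple a b c)
    (ha : a ∈ V) (hb : b ∈ V) (hc : c ∈ V) :
    V = (Submodule.span ℝ (Set.range ![a ⨯₇ b, b ⨯₇ c, c ⨯₇ a]))ᗮ := by
  have hli : LinearIndependent ℝ ![a ⨯₇ b, b ⨯₇ c, c ⨯₇ a] := by
    have := (h.orthonormal_basicFrame.comp ![5, 3, 4] (by decide)).linearIndependent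
    convert! this using 1
    ext i : 1
    fin_cases i <;> rfl
  refine Submodule.eq_of_le_of_finrank_eq ?_ ?_
  · intro x hx
    rw [mem_orthogonal_span_iff, Set.forall_mem_range]
    intro i
    fin_cases i <;> exact (inner_cross7 _ _ _).trans (hV.phi_eq_zero _ ‹_› _ ‹_› _ hx)
  · refine hV.finrank_eq.trans (Submodule.finrank_add_finrank_orthogonal' ?_).symm
    rw [finrank_span_eq_card hli, finrank_euclideanSpace, Fintype.card_fin, Fintype.card_fin]

theorem mem_iff (hV : IsCoassociative V) (h : IsBasicTriple a b c)
    (ha : a ∈ V) (hb : b ∈ V) (hc : c ∈ V) (x : ℝ⁷) :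
    x ∈ V ↔ phi a b x = 0 ∧ phi b c x = 0 ∧ phi c a x = 0 := by
  rw [hV.eq_orthogonal_span h ha hb hc, mem_orthogonal_span_iff, Set.forall_mem_range]
  simp only [Fin.forall_fin_succ, Matrix.cons_val_zero, Matrix.cons_val_succ,
    Matrix.cons_val_fin_one, inner_cross7, forall_const]

end IsCoassociative

/-- `G₂` acts transitively on the Grassmannian of coassociative 4-planes:
given 4-dimensional subspaces `V, W ⊆ ℝ⁷` on each of which `φ` vanishes
identically, some linear isometry of `ℝ⁷` preserving `φ` carries `V` onto
`W`.  (Hence coassociative 4-folds have no first-order invariants.) -/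
theorem G2_transitive_on_coassociative_planes
    (V W : Submodule ℝ (EuclideanSpace ℝ (Fin 7)))
    (hV : Module.finrank ℝ V = 4) (hW : Module.finrank ℝ W = 4)
    (hVphi : ∀ x ∈ V, ∀ y ∈ V, ∀ z ∈ V, phi x y z = 0)
    (hWphi : ∀ x ∈ W, ∀ y ∈ W, ∀ z ∈ W, phi x y z = 0) :
    ∃ g : EuclideanSpace ℝ (Fin 7) ≃ₗᵢ[ℝ] EuclideanSpace ℝ (Fin 7),
      (∀ x y z, phi (g x) (g y) (g z) = phi x y z) ∧
      (fun x => g x) '' (V : Set (EuclideanSpace ℝ (Fin 7))) = W := by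
  obtain ⟨a, ha, b, hb, c, hc, h⟩ := IsCoassociative.exists_isBasicTriple ⟨hV, hVphi⟩
  obtain ⟨_, ha', _, hb', _, hc', h'⟩ := IsCoassociative.exists_isBasicTriple ⟨hW, hWphi⟩
  obtain ⟨g, hg, rfl, rfl, rfl⟩ := h.exists_mem_G2_map_eq h'
  have mem_iff (x) : x ∈ V ↔ g x ∈ W := by
    rw [IsCoassociative.mem_iff ⟨hV, hVphi⟩ h ha hb hc,
      IsCoassociative.mem_iff ⟨hW, hWphi⟩ h' ha' hb' hc', hg, hg, hg]
  exact ⟨g, hg, (Set.eq_preimage_iff_image_eq g.bijective).1 (Set.ext mem_iff)⟩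
end
end
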